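/- arXiv:2507.14067 — 5 statements merged into one kernel-verified Lean document; each statement's English description precedes it below -/
import Mathlib

section
/- Let V be a nonempty finite type, p a probability vector on V, G ⊆ V, δ ≥ 0, and let w be the watermarked distribution with green list G and intensity δ. Then the green-list mass satisfies w(G) = exp(δ)·p(G) / (1 + (exp(δ)-1)·p(G)) and w(G) ≥ p(G); moreover the inequality is strict whenever δ > 0 and 0 < p(G) < 1. -/
/-- Green-list mass of the watermarked distribution:
`w(G) = exp δ · p(G) / (1 + (exp δ - 1) · p(G))`, `w(G) ≥ p(G)`, with strict
inequality when `δ > 0` and `0 < p(G) < 1`. -/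
theorem watermark_green_mass (V : Type*) [Fintype V] [DecidableEq V] [Nonempty V]
    (p : V → ℝ) (hp0 : ∀ k, 0 ≤ p k) (hp1 : ∑ k, p k = 1)
    (G : Finset V) (δ : ℝ) (hδ : 0 ≤ δ)
    (D : ℝ) (hD : D = ∑ k ∈ G, Real.exp δ * p k + ∑ k ∈ Gᶜ, p k)
    (w : V → ℝ)
    (hw : ∀ k, w k = if k ∈ G then Real.exp δ * p k / D else p k / D) :
    (∑ k ∈ G, w k
      = Real.exp δ * (∑ k ∈ G, p k) / (1 + (Real.exp δ - 1) * ∑ k ∈ G, p k)) ∧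
    (∑ k ∈ G, p k ≤ ∑ k ∈ G, w k) ∧
    (0 < δ → 0 < ∑ k ∈ G, p k → ∑ k ∈ G, p k < 1 →
      ∑ k ∈ G, p k < ∑ k ∈ G, w k) := by
  have hsum : ∑ k ∈ G, p k + ∑ k ∈ Gᶜ, p k = 1 := by
    rw [Finset.sum_add_sum_compl, hp1]
  have hG0 : 0 ≤ ∑ k ∈ G, p k := Finset.sum_nonneg fun k _ => hp0 k
  have hGc0 : 0 ≤ ∑ k ∈ Gᶜ, p k := Finset.sum_nonneg fun k _ => hp0 k
  have hmass : ∑ k ∈ G, w k = Real.exp δ * (∑ k ∈ G, p k) / D := by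
    rw [Finset.mul_sum, Finset.sum_div]
    exact Finset.sum_congr rfl fun k hk => by rw [hw k, if_pos hk]
  rw [← Finset.mul_sum] at hD
  rw [hmass]
  have hexp : 1 ≤ Real.exp δ := Real.one_le_exp hδ
  generalize ∑ k ∈ G, p k = g at *
  have hD' : D = 1 + (Real.exp δ - 1) * g := by linarith
  have hDpos : 0 < D := by
    have := mul_nonneg (sub_nonneg.2 hexp) hG0
    linarith
  have hgap : Real.exp δ * g - g * D = (Real.exp δ - 1) * g * (1 - g) := by
    rw [hD']
    ring
  refine ⟨by rw [hD'], ?_, fun hδ' hg0 hg1 => ?_⟩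
  · rw [le_div_iff₀ hDpos, ← sub_nonneg, hgap]
    exact mul_nonneg (mul_nonneg (sub_nonneg.2 hexp) hG0) (by linarith)
  · rw [lt_div_iff₀ hDpos, ← sub_pos, hgap]
    exact mul_pos (mul_pos (sub_pos.2 (Real.one_lt_exp_iff.2 hδ')) hg0) (sub_pos.2 hg1)
end

section
/- Let V be a nonempty finite type, p a probability vector on V, G ⊆ V, δ ∈ ℝ, and let w be the watermarked distribution with green list G and intensity δ. Then the increase of the green-list mass satisfies the exact identity w(G) - p(G) = p(G)·(1 - p(G))·(exp(δ) - 1) / (1 + (exp(δ)-1)·p(G)). -/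
/-- Exact identity for the increase of green-list mass under watermarking:
`w(G) - p(G) = p(G)·(1 - p(G))·(exp δ - 1) / (1 + (exp δ - 1)·p(G))`. -/
theorem watermark_green_mass_increase (V : Type*) [Fintype V] [DecidableEq V] [Nonempty V]
    (p : V → ℝ) (hp0 : ∀ k, 0 ≤ p k) (hp1 : ∑ k, p k = 1)
    (G : Finset V) (δ : ℝ)
    (D : ℝ) (hD : D = ∑ k ∈ G, Real.exp δ * p k + ∑ k ∈ Gᶜ, p k)
    (w : V → ℝ)
    (hw : ∀ k, w k = if k ∈ G then Real.exp δ * p k / D else p k / D) :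
    ∑ k ∈ G, w k - ∑ k ∈ G, p k
      = (∑ k ∈ G, p k) * (1 - ∑ k ∈ G, p k) * (Real.exp δ - 1)
          / (1 + (Real.exp δ - 1) * ∑ k ∈ G, p k) := by
  have hsum : ∑ k ∈ G, p k + ∑ k ∈ Gᶜ, p k = 1 := by
    rw [Finset.sum_add_sum_compl, hp1]
  have hw_green : ∑ k ∈ G, w k = Real.exp δ * (∑ k ∈ G, p k) / D := by
    rw [Finset.mul_sum, Finset.sum_div]
    exact Finset.sum_congr rfl fun k hk => by rw [hw, if_pos hk]
  have hg0 : 0 ≤ ∑ k ∈ G, p k := Finset.sum_nonneg fun k _ => hp0 k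
  have hc0 : 0 ≤ ∑ k ∈ Gᶜ, p k := Finset.sum_nonneg fun k _ => hp0 k
  rw [← Finset.mul_sum] at hD
  rw [hw_green]
  generalize ∑ k ∈ G, p k = g at *
  generalize ∑ k ∈ Gᶜ, p k = c at *
  have hD_eq : D = 1 + (Real.exp δ - 1) * g := by linarith
  have hD_pos : 0 < D := by
    have hexp := Real.exp_pos δ
    rcases hg0.eq_or_lt with rfl | hg
    · linarith
    · have := mul_pos hexp hg
      linarith
  rw [← hD_eq, eq_div_iff hD_pos.ne', sub_mul, div_mul_cancel₀ _ hD_pos.ne', hD_eq]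
  ring
end

section
/- Let V be a nonempty finite type, p a probability vector on V with p k > 0 for all k, G ⊆ V, δ ≥ 0, γ ∈ ℝ with p(G) ≤ γ, and let w be the watermarked distribution with green list G and intensity δ. Then the Kullback–Leibler divergence between the watermarked and the original distribution is bounded by D_KL(w ‖ p) ≤ δ · p(G) · (exp(δ) - 1) ≤ δ · γ · (exp(δ) - 1). -/
/-- Jensen's inequality for `exp`, in logarithmic form. -/
lemma mul_le_log_one_add_exp_sub_one_mul {t : ℝ} (ht0 : 0 ≤ t) (ht1 : t ≤ 1) (x : ℝ) :
    t * x ≤ Real.log (1 + (Real.exp x - 1) * t) := by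
  have h := convexOn_exp.2 (Set.mem_univ x) (Set.mem_univ 0) ht0 (sub_nonneg.2 ht1)
    (add_sub_cancel t 1)
  simp only [smul_eq_mul, mul_zero, add_zero, Real.exp_zero, mul_one] at h
  have h' : Real.exp (t * x) ≤ 1 + (Real.exp x - 1) * t := by linarith
  exact (Real.le_log_iff_exp_le ((Real.exp_pos _).trans_le h')).2 h'

/-- Bound on the KL divergence of the watermarked distribution from the
original: `D_KL(w ‖ p) ≤ δ·p(G)·(exp δ - 1) ≤ δ·γ·(exp δ - 1)`. -/
theorem watermark_kl_bound (V : Type*) [Fintype V] [DecidableEq V] [Nonempty V]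
    (p : V → ℝ) (hp0 : ∀ k, 0 < p k) (hp1 : ∑ k, p k = 1)
    (G : Finset V) (δ : ℝ) (hδ : 0 ≤ δ)
    (γ : ℝ) (hγ : ∑ k ∈ G, p k ≤ γ)
    (D : ℝ) (hD : D = 1 + (Real.exp δ - 1) * ∑ k ∈ G, p k)
    (w : V → ℝ)
    (hw : ∀ k, w k = if k ∈ G then Real.exp δ * p k / D else p k / D) :
    ∑ k, w k * Real.log (w k / p k) ≤ δ * (∑ k ∈ G, p k) * (Real.exp δ - 1) ∧
    δ * (∑ k ∈ G, p k) * (Real.exp δ - 1) ≤ δ * γ * (Real.exp δ - 1) := by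
  set P := ∑ k ∈ G, p k with hP
  have hP0 : 0 ≤ P := Finset.sum_nonneg fun k _ => (hp0 k).le
  have hP1 : P ≤ 1 := hp1 ▸ Finset.sum_le_univ_sum_of_nonneg fun k => (hp0 k).le
  have ha : 0 ≤ Real.exp δ - 1 := sub_nonneg.2 (Real.one_le_exp hδ)
  have hD1 : 1 ≤ D := by rw [hD]; linarith [mul_nonneg ha hP0]
  have hDpos : 0 < D := by linarith
  have hlog : P * δ ≤ Real.log D := hD ▸ mul_le_log_one_add_exp_sub_one_mul hP0 hP1 δ
  have hterm : ∀ k, w k * Real.log (w k / p k) =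
      (if k ∈ G then p k * (Real.exp δ * δ / D - (Real.exp δ - 1) * Real.log D / D) else 0)
        - p k * (Real.log D / D) := by
    intro k
    have hk := (hp0 k).ne'
    rw [hw k]
    split_ifs
    · rw [show Real.exp δ * p k / D / p k = Real.exp δ / D by field_simp,
        Real.log_div (Real.exp_ne_zero δ) hDpos.ne', Real.log_exp]
      ring
    · rw [show p k / D / p k = D⁻¹ by field_simp, Real.log_inv]
      ring
  have hsum : ∑ k, w k * Real.log (w k / p k) = δ * P * (Real.exp δ / D) - Real.log D := by
    have hDD : Real.log D = Real.log D * (1 + (Real.exp δ - 1) * P) / D := by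
      rw [← hD, mul_div_cancel_right₀ _ hDpos.ne']
    rw [Finset.sum_congr rfl fun k _ => hterm k, Finset.sum_sub_distrib, Finset.sum_ite_mem,
      Finset.univ_inter, ← Finset.sum_mul, ← Finset.sum_mul, hp1, ← hP]
    linear_combination hDD
  refine ⟨?_, by gcongr⟩
  have hdiv : Real.exp δ / D ≤ Real.exp δ := div_le_self (Real.exp_pos δ).le hD1
  rw [hsum]
  linarith [mul_le_mul_of_nonneg_left hdiv (mul_nonneg hδ hP0)]
end

section
/- Let N ≥ 1 be a natural number, γ ∈ ℝ with 0 < γ < 1, and δ ≥ 0 with γ·(exp(δ) - 1) ≤ 1. Define the per-token green-list hit probability under watermarking p' = γ·exp(δ) / (1 + γ·(exp(δ) - 1)). Then the expected detection advantage satisfies (N·p' - N·γ) / √(N·γ·(1-γ)) ≥ (δ/2)·√(N·γ·(1-γ)). -/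
/-- Detection advantage: the expected Z-score gap between the watermarked and
null hypotheses is at least `(δ/2)·√(N·γ·(1-γ))`. -/
theorem detection_advantage (N : ℕ) (hN : 1 ≤ N) (γ δ : ℝ)
    (hγ0 : 0 < γ) (hγ1 : γ < 1) (hδ : 0 ≤ δ)
    (h : γ * (Real.exp δ - 1) ≤ 1)
    (p' : ℝ) (hp' : p' = γ * Real.exp δ / (1 + γ * (Real.exp δ - 1))) :
    (δ / 2) * Real.sqrt (N * γ * (1 - γ))
      ≤ (N * p' - N * γ) / Real.sqrt (N * γ * (1 - γ)) := by
  have hN0 : (0 : ℝ) < N := by exact_mod_cast hN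
  have hγ2 : 0 < 1 - γ := sub_pos.mpr hγ1
  have hvar : 0 < N * γ * (1 - γ) := by positivity
  have hexp : δ ≤ Real.exp δ - 1 := by linarith [Real.add_one_le_exp δ]
  have hden : 0 < 1 + γ * (Real.exp δ - 1) := by
    have := mul_nonneg hγ0.le (hδ.trans hexp)
    linarith
  have hgap : N * p' - N * γ
      = (Real.exp δ - 1) / (1 + γ * (Real.exp δ - 1)) * (N * γ * (1 - γ)) := by
    rw [hp']
    field_simp
    ring
  have hratio : δ / 2 ≤ (Real.exp δ - 1) / (1 + γ * (Real.exp δ - 1)) :=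
    div_le_div₀ (hδ.trans hexp) hexp hden (by linarith)
  rw [le_div_iff₀ (Real.sqrt_pos.mpr hvar), mul_assoc, Real.mul_self_sqrt hvar.le, hgap]
  exact mul_le_mul_of_nonneg_right hratio hvar.le
end

section
/- Let n be a natural number, p ∈ ℝ with 0 ≤ p ≤ 1, and ε ∈ ℝ with 0 ≤ ε ≤ 1. If X is a binomial random variable with parameters n and p, then the lower-tail probability satisfies the Chernoff bound P(X ≤ (1-ε)·n·p) = ∑_{k ≤ ⌊(1-ε)·n·p⌋} (n choose k)·p^k·(1-p)^{n-k} ≤ exp(-ε²·n·p / 2). -/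
theorem Real.exp_neg_le_quadratic_of_nonneg {x : ℝ} (hx : 0 ≤ x) :
    Real.exp (-x) ≤ 1 - x + x ^ 2 / 2 := by
  rw [Real.exp_neg, inv_le_iff_one_le_mul₀ (Real.exp_pos x)]
  nlinarith [mul_le_mul_of_nonneg_left (Real.quadratic_le_exp_of_nonneg hx)
    (by nlinarith [sq_nonneg (x - 1)] : 0 ≤ 1 - x + x ^ 2 / 2), sq_nonneg (x ^ 2)]

/-- The exponential Markov inequality for the lower tail of the binomial distribution. -/
theorem binomial_lower_tail_le_exp_mul_mgf (n : ℕ) {p t a : ℝ} (hp0 : 0 ≤ p) (hp1 : p ≤ 1)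
    (ht : 0 ≤ t) (ha0 : 0 ≤ a) (han : a ≤ n) :
    ∑ k ∈ Finset.range (⌊a⌋₊ + 1), (n.choose k : ℝ) * p ^ k * (1 - p) ^ (n - k)
      ≤ Real.exp (t * a) * (p * Real.exp (-t) + (1 - p)) ^ n := by
  have hq : 0 ≤ 1 - p := sub_nonneg.2 hp1
  have hsub : Finset.range (⌊a⌋₊ + 1) ⊆ Finset.range (n + 1) :=
    Finset.range_subset_range.2 (Nat.succ_le_succ (Nat.floor_le_of_le han))
  rw [add_pow, Finset.mul_sum]
  refine le_trans (Finset.sum_le_sum fun k hk => ?_)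
    (Finset.sum_le_sum_of_subset_of_nonneg hsub fun k _ _ => by positivity)
  have hka : (k : ℝ) ≤ a :=
    (Nat.le_floor_iff ha0).1 (Nat.lt_succ_iff.1 (Finset.mem_range.1 hk))
  have hone : 1 ≤ Real.exp (t * a) * Real.exp (-t) ^ k := by
    rw [← Real.exp_nat_mul, ← Real.exp_add]
    exact Real.one_le_exp (by nlinarith)
  calc (n.choose k : ℝ) * p ^ k * (1 - p) ^ (n - k)
      ≤ (n.choose k : ℝ) * p ^ k * (1 - p) ^ (n - k) *
          (Real.exp (t * a) * Real.exp (-t) ^ k) :=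
        le_mul_of_one_le_right (by positivity) hone
    _ = Real.exp (t * a) *
          ((p * Real.exp (-t)) ^ k * (1 - p) ^ (n - k) * (n.choose k : ℝ)) := by
        rw [mul_pow]; ring

/-- Multiplicative Chernoff lower-tail bound for the binomial distribution:
`P(X ≤ (1-ε)·n·p) ≤ exp(-ε²·n·p/2)`. -/
theorem binomial_chernoff_lower_tail (n : ℕ) (p ε : ℝ)
    (hp0 : 0 ≤ p) (hp1 : p ≤ 1) (hε0 : 0 ≤ ε) (hε1 : ε ≤ 1) :
    ∑ k ∈ Finset.range (⌊(1 - ε) * n * p⌋₊ + 1),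
        (n.choose k : ℝ) * p ^ k * (1 - p) ^ (n - k)
      ≤ Real.exp (-(ε ^ 2) * n * p / 2) := by
  have hε : 0 ≤ 1 - ε := sub_nonneg.2 hε1
  have hq : 0 ≤ 1 - p := sub_nonneg.2 hp1
  have hn : (0 : ℝ) ≤ n := n.cast_nonneg
  have han : (1 - ε) * n * p ≤ n :=
    (mul_le_of_le_one_right (by positivity) hp1).trans
      (mul_le_of_le_one_left hn (by linarith))
  refine (binomial_lower_tail_le_exp_mul_mgf n hp0 hp1 hε0 (by positivity) han).trans ?_
  have hbase : p * Real.exp (-ε) + (1 - p) ≤ Real.exp (p * (-ε + ε ^ 2 / 2)) := by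
    nlinarith [Real.add_one_le_exp (p * (-ε + ε ^ 2 / 2)),
      mul_le_mul_of_nonneg_left (Real.exp_neg_le_quadratic_of_nonneg hε0) hp0]
  calc Real.exp (ε * ((1 - ε) * n * p)) * (p * Real.exp (-ε) + (1 - p)) ^ n
      ≤ Real.exp (ε * ((1 - ε) * n * p)) * Real.exp (p * (-ε + ε ^ 2 / 2)) ^ n := by
        gcongr
    _ = Real.exp (-(ε ^ 2) * n * p / 2) := by
        rw [← Real.exp_nat_mul, ← Real.exp_add]
        congr 1
        ring
end
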